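/- Fix an integer n ≥ 1 and a real c > 0. Let L ⊆ ℝ be an open interval and f : L → (−∞, 0) a C² solution of the type III Grim Reaper ODE which is space-like at some s₀ ∈ L, i.e. f'(s₀)² < b_III(f(s₀))², and which is maximal in the sense that there is no solution of the type III Grim Reaper ODE defined on a strictly larger open interval whose restriction to L is f. Then L = ℝ, there exists s_m ∈ ℝ with f'(s_m) = 0 and f(s) > f(s_m) for all s ≠ s_m (a strict absolute minimum), and f(s) → 0 both as s → +∞ and as s → −∞. -/

import Mathlib

open Real Set Filter Topology

/-- The type III warping function `b_III(y) = -n·c·tanh(c·y)`. -/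
noncomputable def bIII (n : ℕ) (c : ℝ) : ℝ → ℝ := fun y => -((n : ℝ) * c * Real.tanh (c * y))

/-- `f` is a `C²` solution of the type III Grim Reaper ODE on `L`, with values in
`I_III = (-∞, 0)`. -/
def IsGrimReaperSolIII (n : ℕ) (c : ℝ) (f : ℝ → ℝ) (L : Set ℝ) : Prop :=
  (∀ s ∈ L, f s ∈ Set.Iio (0 : ℝ)) ∧
  ContDiffOn ℝ 2 f L ∧
  ∀ s ∈ L,
    deriv (deriv f) s =
      (1 - (deriv f s) ^ 2 / (bIII n c (f s)) ^ 2) * bIII n c (f s) * (c ^ 2 * (n : ℝ) ^ 2)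
        + (deriv (bIII n c) (f s) / bIII n c (f s)) * (deriv f s) ^ 2

lemma gr_hasDerivAt_tanh (x : ℝ) : HasDerivAt Real.tanh (1 - Real.tanh x ^ 2) x := by
  have h := (Real.hasDerivAt_sinh x).div (Real.hasDerivAt_cosh x) (Real.cosh_pos x).ne'
  have e : Real.tanh = fun y => Real.sinh y / Real.cosh y := by
    funext y; exact Real.tanh_eq_sinh_div_cosh y
  have hc := (Real.cosh_pos x).ne'
  rw [e]
  refine h.congr_deriv ?_
  field_simp

lemma gr_hasDerivAt_b (n : ℕ) (c y : ℝ) :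
    HasDerivAt (bIII n c) (-((n : ℝ) * c * ((1 - Real.tanh (c * y) ^ 2) * c))) y := by
  have h1 : HasDerivAt (fun y : ℝ => c * y) c y := by
    simpa using (hasDerivAt_id y).const_mul c
  have h2 := (gr_hasDerivAt_tanh (c * y)).comp y h1
  exact (h2.const_mul ((n : ℝ) * c)).neg

lemma gr_b_pos (n : ℕ) (hn : 1 ≤ n) (c : ℝ) (hc : 0 < c) (y : ℝ) (hy : y < 0) :
    0 < bIII n c y := by
  have hn' : (0 : ℝ) < n := by exact_mod_cast hn
  have h1 : Real.tanh (c * y) < 0 := by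
    rw [Real.tanh_eq_sinh_div_cosh]
    exact div_neg_of_neg_of_pos (Real.sinh_neg_iff.2 (mul_neg_of_pos_of_neg hc hy))
      (Real.cosh_pos _)
  unfold bIII
  have : 0 < (n : ℝ) * c := by positivity
  nlinarith

/-- The inner phase. -/
noncomputable def grTau (n : ℕ) (c sm s : ℝ) : ℝ := c ^ 2 * (n : ℝ) ^ 2 * (s - sm)

/-- The explicit solution. -/
noncomputable def grSol (n : ℕ) (c sm k s : ℝ) : ℝ :=
  -(Real.arsinh (Real.exp ((k - Real.log (Real.cosh (grTau n c sm s))) / n)) / c)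

lemma gr_hasDerivAt_tau (n : ℕ) (c sm s : ℝ) :
    HasDerivAt (grTau n c sm) (c ^ 2 * (n : ℝ) ^ 2) s := by
  have h := ((hasDerivAt_id s).sub_const sm).const_mul (c ^ 2 * (n : ℝ) ^ 2)
  rw [mul_one] at h
  exact h

lemma gr_hasDerivAt_logcosh (n : ℕ) (c sm s : ℝ) :
    HasDerivAt (fun s => Real.log (Real.cosh (grTau n c sm s)))
      (c ^ 2 * (n : ℝ) ^ 2 * Real.tanh (grTau n c sm s)) s := by
  have h := ((gr_hasDerivAt_tau n c sm s).cosh).log (Real.cosh_pos _).ne'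
  refine h.congr_deriv ?_
  rw [Real.tanh_eq_sinh_div_cosh]; ring

lemma grSol_neg (n : ℕ) (c : ℝ) (hc : 0 < c) (sm k s : ℝ) : grSol n c sm k s < 0 := by
  unfold grSol
  have := Real.arsinh_pos_iff.2 (Real.exp_pos ((k - Real.log (Real.cosh (grTau n c sm s))) / n))
  have := div_pos this hc
  linarith

lemma grSol_hasDerivAt (n : ℕ) (hn : 1 ≤ n) (c : ℝ) (hc : 0 < c) (sm k s : ℝ) :
    HasDerivAt (grSol n c sm k)
      (bIII n c (grSol n c sm k s) * Real.tanh (grTau n c sm s)) s := by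
  have hn' : (n : ℝ) ≠ 0 := by positivity
  have h := (((((gr_hasDerivAt_logcosh n c sm s).const_sub k).div_const (n : ℝ)).exp.arsinh).div_const
    c).neg
  refine h.congr_deriv ?_
  have e : c * grSol n c sm k s =
      -Real.arsinh (Real.exp ((k - Real.log (Real.cosh (grTau n c sm s))) / n)) := by
    unfold grSol; field_simp
  unfold bIII
  rw [e, Real.tanh_neg, Real.tanh_arsinh]
  simp only [smul_eq_mul]
  set q := Real.exp ((k - Real.log (Real.cosh (grTau n c sm s))) / n)
  have : √(1 + q ^ 2) ≠ 0 := by positivity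
  field_simp

lemma grSol_contDiff (n : ℕ) (c sm k : ℝ) : ContDiff ℝ 2 (grSol n c sm k) := by
  unfold grSol grTau
  have h1 : ContDiff ℝ 2 (fun s : ℝ => Real.cosh (c ^ 2 * (n : ℝ) ^ 2 * (s - sm))) := by
    apply ContDiff.cosh; fun_prop
  have h2 := h1.log (fun s => (Real.cosh_pos _).ne')
  exact ((((contDiff_const.sub h2).div_const _).exp.arsinh).div_const _).neg

lemma grSol_isSol (n : ℕ) (hn : 1 ≤ n) (c : ℝ) (hc : 0 < c) (sm k : ℝ) :
    IsGrimReaperSolIII n c (grSol n c sm k) univ := by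
  refine ⟨fun s _ => grSol_neg n c hc sm k s, (grSol_contDiff n c sm k).contDiffOn, fun s _ => ?_⟩
  have hd : deriv (grSol n c sm k) =
      fun s => bIII n c (grSol n c sm k s) * Real.tanh (grTau n c sm s) := by
    funext s; exact (grSol_hasDerivAt n hn c hc sm k s).deriv
  have h1 := ((gr_hasDerivAt_b n c (grSol n c sm k s)).differentiableAt.hasDerivAt).comp s
    (grSol_hasDerivAt n hn c hc sm k s)
  have h2 := (gr_hasDerivAt_tanh (grTau n c sm s)).comp s (gr_hasDerivAt_tau n c sm s)
  have h3 := (h1.mul h2).deriv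
  have hb := (gr_b_pos n hn c hc _ (grSol_neg n c hc sm k s)).ne'
  rw [hd]
  refine Eq.trans h3 ?_
  simp only [Function.comp]
  field_simp
  ring

lemma gr_const (L : Set ℝ) (hLopen : IsOpen L) (hLconn : L.OrdConnected) (F : ℝ → ℝ)
    (h : ∀ s ∈ L, HasDerivAt F 0 s) (x y : ℝ) (hx : x ∈ L) (hy : y ∈ L) : F x = F y :=
  hLopen.is_const_of_deriv_eq_zero hLconn.isPreconnected
    (fun s hs => (h s hs).differentiableAt.differentiableWithinAt) (fun s hs => (h s hs).deriv) hx hy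

lemma gr_unique (n : ℕ) (hn : 1 ≤ n) (c : ℝ) (hc : 0 < c)
    (L : Set ℝ) (hLopen : IsOpen L) (hLconn : L.OrdConnected)
    (f : ℝ → ℝ) (hf : IsGrimReaperSolIII n c f L)
    (s₀ : ℝ) (hs₀ : s₀ ∈ L)
    (hspace : (deriv f s₀) ^ 2 < (bIII n c (f s₀)) ^ 2) :
    ∃ sm k : ℝ, EqOn (grSol n c sm k) f L := by
  obtain ⟨hneg, hC, hode⟩ := hf
  have hn' : (0 : ℝ) < n := by exact_mod_cast hn
  have hDpos : 0 < c ^ 2 * (n : ℝ) ^ 2 := by positivity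
  have hb : ∀ s ∈ L, 0 < bIII n c (f s) := fun s hs => gr_b_pos n hn c hc _ (hneg s hs)
  have hf1 : ∀ s ∈ L, HasDerivAt f (deriv f s) s := fun s hs =>
    ((hC.differentiableOn (by norm_num)).differentiableAt (hLopen.mem_nhds hs)).hasDerivAt
  have hf2 : ∀ s ∈ L, HasDerivAt (deriv f) (deriv (deriv f) s) s := fun s hs =>
    (((hC.deriv_of_isOpen (m := 1) hLopen (by norm_num)).differentiableOn
      (by norm_num)).differentiableAt (hLopen.mem_nhds hs)).hasDerivAt
  obtain ⟨v, hv⟩ : ∃ v : ℝ → ℝ, v = fun s => deriv f s / bIII n c (f s) := ⟨_, rfl⟩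
  have hfv : ∀ s ∈ L, deriv f s = v s * bIII n c (f s) := fun s hs => by
    rw [hv]; have := (hb s hs).ne'; field_simp
  have hvd : ∀ s ∈ L, HasDerivAt v (c ^ 2 * (n : ℝ) ^ 2 * (1 - v s ^ 2)) s := by
    intro s hs
    have hbs := (hb s hs).ne'
    have h1 := ((gr_hasDerivAt_b n c (f s)).differentiableAt.hasDerivAt).comp s (hf1 s hs)
    have h2 := (hf2 s hs).div h1 hbs
    rw [hv]
    refine h2.congr_deriv ?_
    simp only [Function.comp]
    rw [hode s hs]
    field_simp
    ring
  have hv0 : v s₀ ∈ Ioo (-1 : ℝ) 1 := by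
    have h0 := hb s₀ hs₀
    have : v s₀ ^ 2 < 1 := by
      rw [hv]; simp only [div_pow]
      rw [div_lt_one (by positivity)]; exact hspace
    constructor <;> nlinarith
  obtain ⟨sm, hsm⟩ : ∃ sm : ℝ, grTau n c sm s₀ = Real.artanh (v s₀) := by
    refine ⟨s₀ - Real.artanh (v s₀) / (c ^ 2 * (n : ℝ) ^ 2), ?_⟩
    unfold grTau; field_simp; ring
  have hsh : ∀ s ∈ L, Real.sinh (c * f s) < 0 := fun s hs =>
    Real.sinh_neg_iff.2 (mul_neg_of_pos_of_neg hc (hneg s hs))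
  obtain ⟨ℓ, hℓ⟩ : ∃ ℓ : ℝ → ℝ, ℓ = fun s => Real.log (-Real.sinh (c * f s)) := ⟨_, rfl⟩
  have hld : ∀ s ∈ L, HasDerivAt ℓ (-(n * c ^ 2 * v s)) s := by
    intro s hs
    have h1 := (((hf1 s hs).const_mul c).sinh.neg).log (neg_pos.2 (hsh s hs)).ne'
    rw [hℓ]
    refine h1.congr_deriv ?_
    rw [hfv s hs]
    unfold bIII
    simp only [Pi.neg_apply]
    rw [Real.tanh_eq_sinh_div_cosh]
    have a1 := (hsh s hs).ne
    have a2 := (Real.cosh_pos (c * f s)).ne'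
    field_simp
  have hH : ∀ s ∈ L, HasDerivAt (fun s => (v s * Real.cosh (grTau n c sm s)
      - Real.sinh (grTau n c sm s)) * Real.exp (-(n * ℓ s))) 0 s := by
    intro s hs
    have ht := gr_hasDerivAt_tau n c sm s
    have h1 := (((hvd s hs).mul ht.cosh).sub ht.sinh).mul (((hld s hs).const_mul (n : ℝ)).neg.exp)
    refine h1.congr_deriv ?_
    simp only [Pi.mul_apply, Pi.sub_apply, Pi.neg_apply]
    ring
  have hvt : ∀ s ∈ L, v s = Real.tanh (grTau n c sm s) := by
    intro s hs
    have h1 := gr_const L hLopen hLconn _ hH s s₀ hs hs₀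
    have h2 : v s₀ * Real.cosh (grTau n c sm s₀) - Real.sinh (grTau n c sm s₀) = 0 := by
      have := Real.tanh_artanh hv0
      rw [← hsm, Real.tanh_eq_sinh_div_cosh] at this
      rw [← this]
      have := (Real.cosh_pos (grTau n c sm s₀)).ne'
      field_simp
      ring
    simp only [h2, zero_mul] at h1
    have h3 := (mul_eq_zero.1 h1).resolve_right (Real.exp_pos _).ne'
    rw [Real.tanh_eq_sinh_div_cosh, eq_div_iff (Real.cosh_pos _).ne']
    linarith
  have hK : ∀ s ∈ L, HasDerivAt (fun s => n * ℓ s + Real.log (Real.cosh (grTau n c sm s))) 0 s := by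
    intro s hs
    refine (((hld s hs).const_mul (n : ℝ)).add (gr_hasDerivAt_logcosh n c sm s)).congr_deriv ?_
    rw [hvt s hs]; ring
  refine ⟨sm, n * ℓ s₀ + Real.log (Real.cosh (grTau n c sm s₀)), fun s hs => ?_⟩
  have h1 := gr_const L hLopen hLconn _ hK s s₀ hs hs₀
  unfold grSol
  rw [← h1]
  have e : (n * ℓ s + Real.log (Real.cosh (grTau n c sm s)) - Real.log (Real.cosh (grTau n c sm s))) / n
      = ℓ s := by field_simp; ring
  rw [e, hℓ]
  simp only
  rw [Real.exp_log (neg_pos.2 (hsh s hs)), Real.arsinh_neg, Real.arsinh_sinh]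
  field_simp

lemma gr_tendsto_sol (n : ℕ) (hn : 1 ≤ n) (c sm k : ℝ) (l : Filter ℝ)
    (h : Tendsto (fun s => Real.cosh (grTau n c sm s)) l atTop) :
    Tendsto (grSol n c sm k) l (𝓝 0) := by
  have hn' : (0 : ℝ) < n := by exact_mod_cast hn
  have h1 := Real.tendsto_log_atTop.comp h
  have h2 : Tendsto (fun s => (k - Real.log (Real.cosh (grTau n c sm s))) / n) l atBot := by
    apply Tendsto.atBot_div_const hn'
    exact tendsto_atBot_add_const_left l k (tendsto_neg_atTop_atBot.comp h1)
  have h3 := ((Real.tendsto_exp_atBot.comp h2).arsinh.div_const c).neg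
  rw [Real.arsinh_zero, zero_div, neg_zero] at h3
  exact h3

lemma gr_cosh_ge (x : ℝ) : |x| ≤ Real.cosh x := by
  rw [← Real.cosh_abs, Real.cosh_eq]
  have h1 := Real.add_one_le_exp |x|
  have h2 := Real.quadratic_le_exp_of_nonneg (abs_nonneg x)
  have h3 := Real.exp_pos (-|x|)
  nlinarith [sq_nonneg (|x| - 1)]

theorem grimReaperIII_spacelike_classification (n : ℕ) (hn : 1 ≤ n) (c : ℝ) (hc : 0 < c)
    (L : Set ℝ) (hLopen : IsOpen L) (hLconn : L.OrdConnected)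
    (f : ℝ → ℝ) (hf : IsGrimReaperSolIII n c f L)
    (s₀ : ℝ) (hs₀ : s₀ ∈ L)
    (hspace : (deriv f s₀) ^ 2 < (bIII n c (f s₀)) ^ 2)
    (hmax : ∀ (L' : Set ℝ) (g : ℝ → ℝ), IsOpen L' → L'.OrdConnected → L ⊆ L' →
      IsGrimReaperSolIII n c g L' → Set.EqOn g f L → L' = L) :
    L = Set.univ ∧
    (∃ sm : ℝ, deriv f sm = 0 ∧ ∀ s : ℝ, s ≠ sm → f sm < f s) ∧
    Filter.Tendsto f Filter.atTop (𝓝 0) ∧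
    Filter.Tendsto f Filter.atBot (𝓝 0) := by
  obtain ⟨sm, k, heq⟩ := gr_unique n hn c hc L hLopen hLconn f hf s₀ hs₀ hspace
  have hL : univ = L := hmax univ _ isOpen_univ ordConnected_univ (subset_univ _)
    (grSol_isSol n hn c hc sm k) heq
  have hfe : f = grSol n c sm k := by
    funext s; exact (heq (hL ▸ mem_univ s)).symm
  have hn' : (0 : ℝ) < n := by exact_mod_cast hn
  have hD : 0 < c ^ 2 * (n : ℝ) ^ 2 := by positivity
  have hle : ∀ s, |grTau n c sm s| ≤ Real.cosh (grTau n c sm s) := fun s => gr_cosh_ge _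
  refine ⟨hL.symm, ⟨sm, ?_, fun s hs => ?_⟩, ?_, ?_⟩
  · rw [hfe, (grSol_hasDerivAt n hn c hc sm k sm).deriv]
    simp [grTau]
  · rw [hfe]
    have h1 : 1 < Real.cosh (grTau n c sm s) := by
      rw [Real.one_lt_cosh]
      exact mul_ne_zero hD.ne' (sub_ne_zero.2 hs)
    have h2 := Real.log_pos h1
    have h0 : grTau n c sm sm = 0 := by simp [grTau]
    unfold grSol
    rw [h0, Real.cosh_zero, Real.log_one, neg_lt_neg_iff]
    apply div_lt_div_of_pos_right _ hc
    rw [Real.arsinh_lt_arsinh, Real.exp_lt_exp]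
    apply div_lt_div_of_pos_right _ hn'
    linarith
  · rw [hfe]
    apply gr_tendsto_sol n hn
    refine tendsto_atTop_mono hle (tendsto_abs_atTop_atTop.comp ?_)
    exact (tendsto_atTop_add_const_right atTop (-sm) tendsto_id).const_mul_atTop hD
  · rw [hfe]
    apply gr_tendsto_sol n hn
    refine tendsto_atTop_mono hle (tendsto_abs_atBot_atTop.comp ?_)
    exact (tendsto_atBot_add_const_right atBot (-sm) tendsto_id).const_mul_atBot hD
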